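/- (Theorem 5.1, auxiliary kernel K₂.) With the matrix triplet data as in the context, fix x ∈ ℝ, assume Γ(x) is invertible, and let K̄₂(x, z) := −C·e^{iAx}·Γ(x)^{−1}·e^{iAz}·B. Then for every y > x the auxiliary Marchenko relation K₂(x, y) = −i·∫_x^∞ K̄₂(x, z)·Ω̄'(z + y) dz holds with the explicit value K₂(x, y) = C·e^{iAx}·Γ(x)^{−1}·e^{iAx}·M·Ā·e^{−iĀ(x+y)}·B̄; that is, −i·∫_x^∞ K̄₂(x, z)·Ω̄'(z + y) dz = C·e^{iAx}·Γ(x)^{−1}·e^{iAx}·M·Ā·e^{−iĀ(x+y)}·B̄. -/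

import Mathlib

open MeasureTheory Matrix

/-- e^{iAt} for a complex square matrix A and real t. -/
noncomputable def eiA {n : ℕ} (A : Matrix (Fin n) (Fin n) ℂ) (t : ℝ) :
    Matrix (Fin n) (Fin n) ℂ :=
  NormedSpace.exp ((Complex.I * t) • A)

/-!
The group law moves the shifts by `x` and `y` out of the integrand: up to constant factors on the
left and on the right it is `e^{iAt} B C̄ e^{-iĀt}` with `t = z - x`, whose integral over `(0, ∞)`
is `M`. Only the integrability of this product is in question. It decays exponentially as soon as
the spectrum of `A` lies strictly above that of `Ā`: the eigenspaces of `exp X` are invariant under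
`X`, so the spectrum of `exp X` is the image of that of `X`, and Gelfand's formula turns a bound on
the spectral radius of `exp X` into one on `‖exp (t X)‖`.
-/

open Filter Asymptotics NormedSpace
open scoped NNReal ENNReal

section BanachAlgebra

variable {𝔸 : Type*} [NormedRing 𝔸] [NormedAlgebra ℂ 𝔸] [CompleteSpace 𝔸]

theorem eventually_norm_pow_le_of_spectralRadius_lt {a : 𝔸} {r : ℝ≥0}
    (ha : spectralRadius ℂ a < r) : ∀ᶠ k : ℕ in atTop, ‖a ^ k‖ ≤ r ^ k := by
  have hroot := (spectrum.gelfand_formula a).eventually_lt_const ha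
  filter_upwards [hroot, eventually_ne_atTop 0] with k hk hk0
  have hpow : (‖a ^ k‖₊ : ℝ≥0∞) ≤ (r : ℝ≥0∞) ^ k :=
    calc (‖a ^ k‖₊ : ℝ≥0∞) = ((‖a ^ k‖₊ : ℝ≥0∞) ^ (1 / k : ℝ)) ^ k := by
          rw [one_div, ENNReal.rpow_inv_natCast_pow hk0]
      _ ≤ (r : ℝ≥0∞) ^ k := by gcongr
  exact_mod_cast hpow

theorem exp_smul_eq_pow_floor_mul (a : 𝔸) (t : ℝ) :
    exp ((t : ℂ) • a) = exp a ^ ⌊t⌋₊ * exp (((t - ⌊t⌋₊ : ℝ) : ℂ) • a) := by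
  let _ : NormedAlgebra ℚ 𝔸 := NormedAlgebra.restrictScalars ℚ ℂ 𝔸
  rw [← NormedSpace.exp_nsmul,
    ← NormedSpace.exp_add_of_commute (((Commute.refl a).smul_left _).smul_right _),
    ← Nat.cast_smul_eq_nsmul ℂ, ← add_smul]
  push_cast
  rw [add_sub_cancel]

theorem isBigO_exp_smul_of_spectralRadius_lt {a : 𝔸} {c : ℝ}
    (ha : spectralRadius ℂ (exp a) < ENNReal.ofReal (Real.exp c)) :
    (fun t : ℝ => exp ((t : ℂ) • a)) =O[atTop] fun t => Real.exp (c * t) := by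
  have hpow : ∀ᶠ t : ℝ in atTop, ‖exp a ^ ⌊t⌋₊‖ ≤ Real.exp (c * ⌊t⌋₊) := by
    filter_upwards [tendsto_nat_floor_atTop.eventually
      (eventually_norm_pow_le_of_spectralRadius_lt ha)] with t ht
    rwa [Real.coe_toNNReal _ (Real.exp_pos c).le, ← Real.exp_nat_mul, mul_comm] at ht
  have hcont : Continuous fun s : ℝ => ‖exp ((s : ℂ) • a)‖ / Real.exp (c * s) := by
    let _ : NormedAlgebra ℚ 𝔸 := NormedAlgebra.restrictScalars ℚ ℂ 𝔸
    have := exp_continuous (𝔸 := 𝔸)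
    fun_prop (disch := exact fun _ => (Real.exp_pos _).ne')
  obtain ⟨K, hK⟩ := (isCompact_Icc (a := (0 : ℝ)) (b := 1)).bddAbove_image hcont.continuousOn
  refine IsBigO.of_bound K ?_
  filter_upwards [hpow, eventually_ge_atTop 0] with t ht ht0
  set s : ℝ := t - ⌊t⌋₊ with hs
  have hs_mem : s ∈ Set.Icc (0 : ℝ) 1 :=
    ⟨sub_nonneg.2 (Nat.floor_le ht0), by linarith [Nat.lt_floor_add_one t]⟩
  have hsK : ‖exp ((s : ℂ) • a)‖ ≤ K * Real.exp (c * s) :=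
    (div_le_iff₀ (Real.exp_pos _)).1 (hK (Set.mem_image_of_mem _ hs_mem))
  calc ‖exp ((t : ℂ) • a)‖ ≤ ‖exp a ^ ⌊t⌋₊‖ * ‖exp ((s : ℂ) • a)‖ := by
        rw [exp_smul_eq_pow_floor_mul]
        exact norm_mul_le _ _
    _ ≤ Real.exp (c * ⌊t⌋₊) * (K * Real.exp (c * s)) := by gcongr
    _ = K * ‖Real.exp (c * t)‖ := by
        rw [mul_left_comm, ← Real.exp_add, ← mul_add, hs, add_sub_cancel, Real.norm_of_nonneg
          (Real.exp_pos _).le]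

end BanachAlgebra

theorem exists_hasEigenvector_of_commute {K V : Type*} [Field K] [IsAlgClosed K] [AddCommGroup V]
    [Module K V] [FiniteDimensional K V] {f g : Module.End K V} (hfg : Commute f g) {μ : K}
    (hμ : g.HasEigenvalue μ) : ∃ (ν : K) (v : V), f.HasEigenvector ν v ∧ g.HasEigenvector μ v := by
  have hmaps : Set.MapsTo f (g.eigenspace μ) (g.eigenspace μ) :=
    Module.End.mapsTo_genEigenspace_of_comm hfg.symm μ 1
  have : Nontrivial (g.eigenspace μ) := Submodule.nontrivial_iff_ne_bot.2 hμ
  obtain ⟨ν, hν⟩ := Module.End.exists_eigenvalue (f.restrict hmaps)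
  obtain ⟨v, hv⟩ := hν.exists_hasEigenvector
  have hv0 : (v : V) ≠ 0 := by simpa using hv.2
  refine ⟨ν, v, Module.End.hasEigenvector_iff.2 ⟨?_, hv0⟩,
    Module.End.hasEigenvector_iff.2 ⟨v.2, hv0⟩⟩
  exact Module.End.mem_eigenspace_iff.2 (congrArg Subtype.val hv.apply_eq_smul)

theorem exists_lt_forall_lt_forall_gt_of_finite {α : Type*} [LinearOrder α] [DenselyOrdered α]
    [NoMinOrder α] [NoMaxOrder α] [Nonempty α] {s t : Set α} (hs : s.Finite) (ht : t.Finite)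
    (hst : ∀ a ∈ s, ∀ b ∈ t, a < b) : ∃ c d, c < d ∧ (∀ a ∈ s, a < c) ∧ ∀ b ∈ t, d < b := by
  obtain ⟨c, hsc, hct⟩ := Order.exists_between_finsets hs.toFinset ht.toFinset (by simpa using hst)
  obtain ⟨d, hcd, hdt⟩ := Order.exists_between_finsets {c} ht.toFinset (by simpa using hct)
  exact ⟨c, d, by simpa using hcd, by simpa using hsc, by simpa using hdt⟩

theorem setIntegral_Ioi_eq_comp_add_right {E : Type*} [NormedAddCommGroup E] [NormedSpace ℝ E]
    (f : ℝ → E) (x a : ℝ) : ∫ z in Set.Ioi x, f z = ∫ t in Set.Ioi (x - a), f (t + a) := by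
  rw [← Set.preimage_add_const_Ioi]
  exact ((measurePreserving_add_right volume a).setIntegral_preimage_emb
    (measurableEmbedding_addRight a) f (Set.Ioi x)).symm

theorem integral_mul_mul_apply {𝕜 α l m n p : Type*} [RCLike 𝕜] [MeasurableSpace α]
    {μ : Measure α} [Fintype m] [Fintype n] {F : α → Matrix m n 𝕜}
    (hF : ∀ i j, Integrable (fun a => F a i j) μ) (P : Matrix l m 𝕜) (Q : Matrix n p 𝕜)
    (i : l) (j : p) :
    ∫ a, (P * F a * Q) i j ∂μ = (P * of (fun i j => ∫ a, F a i j ∂μ) * Q) i j := by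
  have hterm (k : n) (r : m) : Integrable (fun a => P i r * F a r k * Q k j) μ :=
    ((hF r k).const_mul _).mul_const _
  simp only [mul_apply, Finset.sum_mul, of_apply]
  rw [integral_finsetSum _ fun k _ => integrable_finsetSum _ fun r _ => hterm k r]
  simp_rw [integral_finsetSum _ fun r _ => hterm _ r, integral_mul_const, integral_const_mul]

section OperatorNorm

open scoped Matrix.Norms.Operator Pointwise

theorem norm_apply_le_linfty_opNorm {l k α : Type*} [Fintype l] [Fintype k]
    [SeminormedAddCommGroup α] (X : Matrix l k α) (i : l) (j : k) : ‖X i j‖ ≤ ‖X‖ := by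
  have hrow : ‖X i j‖₊ ≤ ∑ j, ‖X i j‖₊ :=
    Finset.single_le_sum (f := fun j => ‖X i j‖₊) (fun _ _ => zero_le) (Finset.mem_univ j)
  rw [linfty_opNorm_def]
  exact hrow.trans (Finset.le_sup (f := fun i => ∑ j, ‖X i j‖₊) (Finset.mem_univ i))

section MatrixExponential

variable {n : Type*} [Fintype n] [DecidableEq n]

theorem exp_mulVec_of_mulVec_eq_smul {A : Matrix n n ℂ} {μ : ℂ} {v : n → ℂ}
    (hv : A *ᵥ v = μ • v) : exp A *ᵥ v = Complex.exp μ • v := by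
  have hpow (k : ℕ) : A ^ k *ᵥ v = μ ^ k • v := by
    induction k with
    | zero => simp
    | succ k ih =>
      rw [pow_succ, ← mulVec_mulVec, hv, mulVec_smul, ih, smul_smul, mul_comm, pow_succ]
  have hleft := (exp_series_hasSum_exp' (𝕂 := ℂ) A).map (mulVecBilin ℂ ℂ |>.flip v)
    (LinearMap.continuous_of_finiteDimensional _)
  have hright := (exp_series_hasSum_exp' (𝕂 := ℂ) μ).smul_const v
  rw [Complex.exp_eq_exp_ℂ]
  refine hleft.unique ?_
  convert hright using 2 with k
  simp [hpow, smul_smul]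

theorem spectrum_matrix_exp (A : Matrix n n ℂ) :
    spectrum ℂ (exp A) = Complex.exp '' spectrum ℂ A := by
  refine Set.Subset.antisymm (fun r hr => ?_) ?_
  · rw [← spectrum_toLin', ← Module.End.hasEigenvalue_iff_mem_spectrum] at hr
    have hcomm : Commute A.toLin' (exp A).toLin' := (Commute.refl A).exp_right.map toLinAlgEquiv'
    obtain ⟨μ, v, hA, hexp⟩ := exists_hasEigenvector_of_commute hcomm hr
    refine ⟨μ, ?_, ?_⟩
    · rw [← spectrum_toLin']
      exact (Module.End.hasEigenvalue_of_hasEigenvector hA).mem_spectrum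
    · refine smul_left_injective ℂ hexp.2 ?_
      exact (exp_mulVec_of_mulVec_eq_smul hA.apply_eq_smul).symm.trans hexp.apply_eq_smul
  · rintro _ ⟨μ, hμ, rfl⟩
    rw [Complex.exp_eq_exp_ℂ]
    exact spectrum.exp_mem_exp A hμ

theorem spectralRadius_matrix_exp_lt {A : Matrix n n ℂ} {c : ℝ}
    (hA : ∀ μ ∈ spectrum ℂ A, μ.re < c) :
    spectralRadius ℂ (exp A) < ENNReal.ofReal (Real.exp c) := by
  obtain hn | hn := isEmpty_or_nonempty n
  · simp [Subsingleton.elim (exp A) 0, Real.exp_pos]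
  · refine spectrum.spectralRadius_lt_of_forall_lt _ fun r hr => ?_
    obtain ⟨μ, hμ, rfl⟩ := (spectrum_matrix_exp A).subset hr
    rw [← NNReal.coe_lt_coe, coe_nnnorm, Complex.norm_exp, Real.coe_toNNReal _ (Real.exp_pos c).le]
    exact Real.exp_lt_exp.2 (hA μ hμ)

theorem isBigO_exp_smul_of_forall_spectrum_re_lt {A : Matrix n n ℂ} {c : ℝ}
    (hA : ∀ μ ∈ spectrum ℂ A, μ.re < c) :
    (fun t : ℝ => exp ((t : ℂ) • A)) =O[atTop] fun t => Real.exp (c * t) :=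
  isBigO_exp_smul_of_spectralRadius_lt (spectralRadius_matrix_exp_lt hA)

end MatrixExponential

variable {n m : ℕ} {A : Matrix (Fin n) (Fin n) ℂ} {Ab : Matrix (Fin m) (Fin m) ℂ}

theorem continuous_eiA (A : Matrix (Fin n) (Fin n) ℂ) : Continuous (eiA A) := by
  let _ : NormedAlgebra ℚ (Matrix (Fin n) (Fin n) ℂ) := NormedAlgebra.restrictScalars ℚ ℂ _
  have : Continuous (exp : Matrix (Fin n) (Fin n) ℂ → _) := exp_continuous
  unfold eiA
  fun_prop

theorem eiA_add (A : Matrix (Fin n) (Fin n) ℂ) (s t : ℝ) : eiA A (s + t) = eiA A s * eiA A t := by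
  unfold eiA
  rw [← Matrix.exp_add_of_commute _ _ (((Commute.refl A).smul_left _).smul_right _), ← add_smul]
  push_cast
  rw [mul_add]

theorem commute_eiA (A : Matrix (Fin n) (Fin n) ℂ) (t : ℝ) : Commute A (eiA A t) :=
  ((Commute.refl A).smul_right _).exp_right

theorem eiA_neg (A : Matrix (Fin n) (Fin n) ℂ) (t : ℝ) : eiA A (-t) = eiA (-A) t := by
  unfold eiA
  simp

theorem isBigO_eiA {c : ℝ} (hA : ∀ μ ∈ spectrum ℂ A, c < μ.im) :
    eiA A =O[atTop] fun t => Real.exp (-c * t) := by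
  have hre : ∀ μ ∈ spectrum ℂ (Complex.I • A), μ.re < -c := by
    have hsmul : spectrum ℂ (Complex.I • A) = Complex.I • spectrum ℂ A :=
      spectrum.unit_smul_eq_smul A (Units.mk0 Complex.I Complex.I_ne_zero)
    rw [hsmul]
    rintro _ ⟨μ, hμ, rfl⟩
    simpa using hA μ hμ
  refine (isBigO_exp_smul_of_forall_spectrum_re_lt hre).congr_left fun t => ?_
  rw [smul_smul, mul_comm, eiA]

theorem isBigO_eiA_neg {c : ℝ} (hA : ∀ μ ∈ spectrum ℂ A, μ.im < c) :
    (fun t => eiA A (-t)) =O[atTop] fun t => Real.exp (c * t) := by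
  have hneg : ∀ μ ∈ spectrum ℂ (-A), -c < μ.im := by
    rw [← spectrum.neg_eq]
    intro μ hμ
    simpa using neg_lt_neg (hA _ hμ)
  simpa [eiA_neg] using isBigO_eiA hneg

theorem isBigO_eiA_mul_mul_eiA_neg {c d : ℝ} (hA : ∀ μ ∈ spectrum ℂ A, d < μ.im)
    (hAb : ∀ ν ∈ spectrum ℂ Ab, ν.im < c) (W : Matrix (Fin n) (Fin m) ℂ) :
    (fun z => eiA A z * W * eiA Ab (-z)) =O[atTop] fun z => Real.exp (-(d - c) * z) := by
  have hnorm : (fun z => eiA A z * W * eiA Ab (-z)) =O[atTop]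
      fun z => ‖eiA A z‖ * ‖W‖ * ‖eiA Ab (-z)‖ := by
    refine IsBigO.of_norm_le fun z => (linfty_opNorm_mul _ _).trans ?_
    gcongr
    exact linfty_opNorm_mul _ _
  have hfactors := ((isBigO_eiA hA).norm_left.mul (isBigO_const_const ‖W‖ one_ne_zero _)).mul
    (isBigO_eiA_neg hAb).norm_left
  refine (hnorm.trans hfactors).congr_right fun z => ?_
  rw [mul_one, ← Real.exp_add]
  ring_nf

theorem integrableOn_eiA_mul_mul_eiA_neg_apply
    (hsep : ∀ μ ∈ spectrum ℂ A, ∀ ν ∈ spectrum ℂ Ab, ν.im < μ.im) (W : Matrix (Fin n) (Fin m) ℂ)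
    (a : ℝ) (i : Fin n) (j : Fin m) :
    IntegrableOn (fun z => (eiA A z * W * eiA Ab (-z)) i j) (Set.Ioi a) := by
  obtain ⟨c, d, hcd, hc, hd⟩ := exists_lt_forall_lt_forall_gt_of_finite
    (Ab.finite_spectrum.image Complex.im) (A.finite_spectrum.image Complex.im)
    (by simpa using fun ν hν μ hμ => hsep μ hμ ν hν)
  have hdecay : (fun z => (eiA A z * W * eiA Ab (-z)) i j) =O[atTop]
      fun z => Real.exp (-(d - c) * z) :=
    (IsBigO.of_bound' (.of_forall fun z => norm_apply_le_linfty_opNorm _ i j)).trans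
      (isBigO_eiA_mul_mul_eiA_neg (fun μ hμ => hd _ (Set.mem_image_of_mem _ hμ))
        (fun ν hν => hc _ (Set.mem_image_of_mem _ hν)) W)
  have hcont : Continuous fun z => (eiA A z * W * eiA Ab (-z)) i j :=
    (((continuous_eiA A).matrix_mul continuous_const).matrix_mul
      ((continuous_eiA Ab).comp continuous_neg)).matrix_elem i j
  exact (integrable_norm_iff hcont.aestronglyMeasurable).1
    (integrable_of_isBigO_exp_neg (sub_pos.2 hcd) hcont.norm.continuousOn hdecay.norm_left)

end OperatorNorm

/-- The matrix `∫₀^∞ e^{iAz} W e^{-iĀz} dz`, which solves the Sylvester equation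
`A X - X Ā = i W` when the spectrum of `A` lies above that of `Ā`; the paper's `M` is the case
`W = B C̄`. It is encoded entrywise, so that it does not depend on a choice of matrix norm. -/
noncomputable def sylvesterIntegral {n m : ℕ} (A : Matrix (Fin n) (Fin n) ℂ)
    (W : Matrix (Fin n) (Fin m) ℂ) (Ab : Matrix (Fin m) (Fin m) ℂ) : Matrix (Fin n) (Fin m) ℂ :=
  of fun i j => ∫ z in Set.Ioi (0 : ℝ), (eiA A z * W * eiA Ab (-z)) i j

section SeparatedSpectra

variable {n m : ℕ} {A : Matrix (Fin n) (Fin n) ℂ} {Ab : Matrix (Fin m) (Fin m) ℂ}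

theorem eiA_add_mul_mul_eiA_neg_add (A : Matrix (Fin n) (Fin n) ℂ) (W : Matrix (Fin n) (Fin m) ℂ)
    (Ab : Matrix (Fin m) (Fin m) ℂ) (t x y : ℝ) :
    eiA A (t + x) * W * (Ab * eiA Ab (-(t + x + y))) =
      eiA A x * (eiA A t * W * eiA Ab (-t)) * (Ab * eiA Ab (-(x + y))) := by
  have hleft : eiA A (t + x) = eiA A x * eiA A t := by rw [add_comm, eiA_add]
  have hright : Ab * eiA Ab (-(t + x + y)) = eiA Ab (-t) * (Ab * eiA Ab (-(x + y))) := by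
    rw [add_assoc, neg_add, eiA_add, ← Matrix.mul_assoc, (commute_eiA Ab (-t)).eq,
      Matrix.mul_assoc]
  rw [hleft, hright]
  simp only [Matrix.mul_assoc]

theorem setIntegral_Ioi_eiA_mul_mul_eiA_neg_add {p q : Type*}
    (hsep : ∀ μ ∈ spectrum ℂ A, ∀ ν ∈ spectrum ℂ Ab, ν.im < μ.im) (W : Matrix (Fin n) (Fin m) ℂ)
    (L : Matrix p (Fin n) ℂ) (R : Matrix (Fin m) q ℂ) (x y : ℝ) (i : p) (j : q) :
    ∫ z in Set.Ioi x, (L * (eiA A z * W * (Ab * eiA Ab (-(z + y)))) * R) i j =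
      (L * eiA A x * sylvesterIntegral A W Ab * (Ab * eiA Ab (-(x + y)) * R)) i j := by
  have hshift (t : ℝ) : L * (eiA A (t + x) * W * (Ab * eiA Ab (-(t + x + y)))) * R =
      L * eiA A x * (eiA A t * W * eiA Ab (-t)) * (Ab * eiA Ab (-(x + y)) * R) := by
    rw [eiA_add_mul_mul_eiA_neg_add]
    simp only [Matrix.mul_assoc]
  rw [setIntegral_Ioi_eq_comp_add_right _ x x, sub_self]
  simp only [hshift]
  exact integral_mul_mul_apply (integrableOn_eiA_mul_mul_eiA_neg_apply hsep W 0) _ _ i j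

theorem marchenko_auxiliary_K2_general
    (hsep : ∀ μ ∈ spectrum ℂ A, ∀ ν ∈ spectrum ℂ Ab, ν.im < μ.im)
    (B : Matrix (Fin n) (Fin 1) ℂ) (Bb : Matrix (Fin m) (Fin 1) ℂ) (Cb : Matrix (Fin 1) (Fin m) ℂ)
    {M : Matrix (Fin n) (Fin m) ℂ}
    (hM : ∀ i j, M i j = ∫ z in Set.Ioi (0 : ℝ), (eiA A z * B * Cb * eiA Ab (-z)) i j)
    (L : Matrix (Fin 1) (Fin n) ℂ) {x : ℝ} {Kb₂ : ℝ → ℂ}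
    (hKb₂ : ∀ z, x < z → Kb₂ z = -((L * eiA A z * B) 0 0)) (y : ℝ) :
    -Complex.I
        * (∫ z in Set.Ioi x, Kb₂ z * (-Complex.I * ((Cb * (Ab * eiA Ab (-(z + y))) * Bb) 0 0)))
      = (L * eiA A x * M * (Ab * eiA Ab (-(x + y))) * Bb) 0 0 := by
  have hM' : M = sylvesterIntegral A (B * Cb) Ab := by
    ext i j
    simp only [hM, sylvesterIntegral, of_apply, Matrix.mul_assoc]
  have hkernel (z : ℝ) (hz : x < z) :
      -Complex.I * (Kb₂ z * (-Complex.I * ((Cb * (Ab * eiA Ab (-(z + y))) * Bb) 0 0))) =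
        (L * (eiA A z * (B * Cb) * (Ab * eiA Ab (-(z + y)))) * Bb) 0 0 := by
    have hmul : L * (eiA A z * (B * Cb) * (Ab * eiA Ab (-(z + y)))) * Bb =
        L * eiA A z * B * (Cb * (Ab * eiA Ab (-(z + y))) * Bb) := by
      simp only [Matrix.mul_assoc]
    rw [hmul, mul_apply (M := L * eiA A z * B), Fin.sum_univ_one, hKb₂ z hz]
    linear_combination (L * eiA A z * B) 0 0 * (Cb * (Ab * eiA Ab (-(z + y))) * Bb) 0 0 *
      (-Complex.I_mul_I)
  rw [← integral_const_mul, setIntegral_congr_fun measurableSet_Ioi hkernel,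
    setIntegral_Ioi_eiA_mul_mul_eiA_neg_add hsep, ← hM', ← Matrix.mul_assoc]

end SeparatedSpectra

/-- Theorem 5.1, auxiliary kernel K₂: the auxiliary Marchenko relation
K₂(x,y) = −i ∫_x^∞ K̄₂(x,z) Ω̄'(z+y) dz holds with the explicit value
K₂(x,y) = C e^{iAx} Γ(x)⁻¹ e^{iAx} M Ā e^{-iĀ(x+y)} B̄. -/
theorem marchenko_auxiliary_K2
    (𝒩 𝒩b : ℕ)
    (A : Matrix (Fin 𝒩) (Fin 𝒩) ℂ) (hA : ∀ μ ∈ spectrum ℂ A, 0 < μ.im)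
    (B : Matrix (Fin 𝒩) (Fin 1) ℂ) (C : Matrix (Fin 1) (Fin 𝒩) ℂ)
    (Ab : Matrix (Fin 𝒩b) (Fin 𝒩b) ℂ) (hAb : ∀ μ ∈ spectrum ℂ Ab, μ.im < 0)
    (Bb : Matrix (Fin 𝒩b) (Fin 1) ℂ) (Cb : Matrix (Fin 1) (Fin 𝒩b) ℂ)
    (M : Matrix (Fin 𝒩) (Fin 𝒩b) ℂ)
    (hM : ∀ i j, M i j = ∫ z in Set.Ioi (0 : ℝ), (eiA A z * B * Cb * eiA Ab (-z)) i j)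
    (Mb : Matrix (Fin 𝒩b) (Fin 𝒩) ℂ)
    (hMb : ∀ i j, Mb i j = ∫ z in Set.Ioi (0 : ℝ), (eiA Ab (-z) * Bb * C * eiA A z) i j)
    (x : ℝ)
    (Γ : Matrix (Fin 𝒩) (Fin 𝒩) ℂ)
    (hΓ : Γ = 1 - eiA A x * M * Ab * eiA Ab (-(2 * x)) * Mb * eiA A x)
    (hΓinv : IsUnit Γ)
    (Kb₂ : ℝ → ℂ)
    (hKb₂ : ∀ z : ℝ, x ≤ z →
      Kb₂ z = -((C * eiA A x * Γ⁻¹ * eiA A z * B) 0 0)) :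
    ∀ y : ℝ, x < y →
      -Complex.I
          * (∫ z in Set.Ioi x, Kb₂ z * (-Complex.I * ((Cb * (Ab * eiA Ab (-(z + y))) * Bb) 0 0)))
        = (C * eiA A x * Γ⁻¹ * eiA A x * M * (Ab * eiA Ab (-(x + y))) * Bb) 0 0 := by
  intro y _
  exact marchenko_auxiliary_K2_general (fun μ hμ ν hν => (hAb ν hν).trans (hA μ hμ)) B Bb Cb hM
    (C * eiA A x * Γ⁻¹) (fun z hz => hKb₂ z hz.le) y
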